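/- Let A be a left self-injective semiprimary ring with left socle Σ. Then Σ is semisimple as a right A-module; in particular, the left socle of A is contained in the right socle of A. -/

import Mathlib

universe u

open Cardinal

/-- A ring is *semiprimary* if its Jacobson radical `J` is nilpotent
(`J ^ n = 0`, expressed elementwise: every product of `n` elements of `J` vanishes)
and the quotient ring `A / J` is a semisimple ring. -/
def IsSemiprimary (A : Type*) [Ring A] : Prop :=
  IsSemisimpleRing (RingCon.Quotient (⊥ : TwoSidedIdeal A).jacobson.ringCon) ∧
  ∃ n : ℕ, 0 < n ∧ ∀ f : Fin n → A,
    (∀ i, f i ∈ Ideal.jacobson (⊥ : Ideal A)) → (List.ofFn f).prod = 0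

/-- A ring is *quasi-Frobenius* if it is left self-injective and left artinian. -/
def IsQuasiFrobenius (A : Type*) [Ring A] : Prop :=
  Module.Injective A A ∧ IsArtinianRing A

/-- The socle of a module: the sum of all its simple submodules. -/
def socle (R M : Type*) [Ring R] [AddCommGroup M] [Module R M] : Submodule R M :=
  sSup {N : Submodule R M | IsSimpleModule R N}

/-- A module killed by the kernel of a surjection onto a semisimple ring is semisimple. -/
theorem semisimple_of_surj {R S M : Type*} [Ring R] [Ring S] [AddCommGroup M] [Module R M]
    (f : R →+* S) (hf : Function.Surjective f) [IsSemisimpleRing S]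
    (h : ∀ r, f r = 0 → ∀ m : M, r • m = 0) : IsSemisimpleModule R M := by
  let g : S →+* AddMonoid.End M := f.liftOfSurjective hf ⟨Module.toAddMonoidEnd R M, by
    intro r hr
    rw [RingHom.mem_ker] at hr ⊢
    ext m
    exact h r hr m⟩
  have hg : ∀ r, g (f r) = Module.toAddMonoidEnd R M r := fun r =>
    f.liftOfRightInverse_comp_apply _ _ _ r
  let : Module S M := Module.compHom M g
  have : RingHomSurjective f := ⟨hf⟩
  let l : M →ₛₗ[f] M :=
    { toFun := id
      map_add' := fun _ _ => rfl
      map_smul' := fun r m => by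
        change r • m = g (f r) m
        rw [hg]; rfl }
  exact (l.isSemisimpleModule_iff_of_bijective Function.bijective_id).2 inferInstance

/-- Right multiplication as a left linear map. -/
def rmul (A : Type*) [Ring A] (a : A) : A →ₗ[A] A := LinearMap.toSpanSingleton A A a

theorem rmul_apply (A : Type*) [Ring A] (a x : A) : rmul A a x = x * a := rfl

theorem simple_map_le_socle {R M N : Type*} [Ring R] [AddCommGroup M] [Module R M]
    [AddCommGroup N] [Module R N] (f : M →ₗ[R] N) (S : Submodule R M) (hS : IsSimpleModule R S) :
    S.map f ≤ socle R N := by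
  rcases LinearMap.injective_or_eq_zero (f.comp S.subtype) with h | h
  · apply le_sSup
    have e := LinearEquiv.ofInjective _ h
    have : IsSimpleModule R (LinearMap.range (f.comp S.subtype)) := IsSimpleModule.congr e.symm
    rwa [LinearMap.range_comp, Submodule.range_subtype] at this
  · rintro _ ⟨x, hx, rfl⟩
    have := LinearMap.congr_fun h ⟨x, hx⟩
    have h0 : f x = 0 := this
    rw [h0]; exact zero_mem _

theorem socle_map_le {R M N : Type*} [Ring R] [AddCommGroup M] [Module R M]
    [AddCommGroup N] [Module R N] (f : M →ₗ[R] N) : (socle R M).map f ≤ socle R N := by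
  rw [Submodule.map_le_iff_le_comap]
  exact sSup_le fun S hS => Submodule.map_le_iff_le_comap.1 (simple_map_le_socle f S hS)

theorem socle_mul_radical (A : Type u) [Ring A] (hinj : Module.Injective A A) (a : A)
    (ha : ∀ b : A, IsNilpotent (b * a)) (x : A) (hx : x ∈ socle A A) : x * a = 0 := by
  suffices h : socle A A ≤ LinearMap.ker (rmul A a) from h hx
  refine sSup_le fun S hS => ?_
  have : IsSimpleModule A S := hS
  rcases LinearMap.injective_or_eq_zero ((rmul A a).comp S.subtype) with h | h
  · obtain ⟨k, hk⟩ := hinj.out _ h S.subtype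
    intro s hs
    have h1 : s * a * k 1 = s := by
      have h2 := hk ⟨s, hs⟩
      change k (s * a) = s at h2
      rw [← smul_eq_mul, ← map_smul, smul_eq_mul, mul_one]; exact h2
    obtain ⟨n, hn⟩ := ha (k 1)
    have h3 : ∀ m : ℕ, s * a * (k 1 * a) ^ m = s * a := by
      intro m
      induction m with
      | zero => simp
      | succ m ih => rw [pow_succ, ← mul_assoc, ih, ← mul_assoc, h1]
    have h4 := h3 n
    rw [hn, mul_zero] at h4
    exact h4.symm
  · intro s hs
    exact LinearMap.congr_fun h ⟨s, hs⟩

/-- For a left self-injective semiprimary ring `A`, the left socle `Σ` of `A` is semisimple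
as a right `A`-module: it is a right submodule of `A` which is a semisimple `Aᵐᵒᵖ`-module.
In particular, the left socle is contained in the right socle. -/
theorem left_socle_right_semisimple_of_selfinjective_semiprimary
    (A : Type u) [Ring A] (hsp : IsSemiprimary A) (hinj : Module.Injective A A) :
    (∃ Sop : Submodule Aᵐᵒᵖ A,
      (∀ x : A, x ∈ Sop ↔ x ∈ socle A A) ∧ IsSemisimpleModule Aᵐᵒᵖ Sop) ∧
    ∀ x : A, x ∈ socle A A → x ∈ socle Aᵐᵒᵖ A := by
  obtain ⟨hss, n, _, hn⟩ := hsp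
  let Sop : Submodule Aᵐᵒᵖ A :=
    { carrier := {x | x ∈ socle A A}
      add_mem' := fun hx hy => (socle A A).add_mem hx hy
      zero_mem' := zero_mem (socle A A)
      smul_mem' := fun r x hx => socle_map_le (rmul A r.unop) ⟨x, hx, rfl⟩ }
  have hS : IsSemisimpleModule Aᵐᵒᵖ Sop := by
    have := hss
    refine semisimple_of_surj (RingHom.op ((⊥ : TwoSidedIdeal A).jacobson.ringCon.mk')) ?_ ?_
    · intro y
      obtain ⟨x, hx⟩ := RingCon.mk'_surjective _ y.unop
      exact ⟨MulOpposite.op x, congrArg MulOpposite.op hx⟩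
    · rintro r hr ⟨x, hx⟩
      have h0 : (⊥ : TwoSidedIdeal A).jacobson.ringCon.mk' r.unop = 0 :=
        congrArg MulOpposite.unop hr
      have h1 : r.unop ∈ (⊥ : TwoSidedIdeal A).jacobson := by
        rwa [← TwoSidedIdeal.mem_ker, TwoSidedIdeal.ker_ringCon_mk'] at h0
      have h2 : r.unop ∈ Ideal.jacobson (⊥ : Ideal A) := by
        rw [TwoSidedIdeal.mem_jacobson_iff] at h1
        rw [Ideal.mem_jacobson_iff]
        simpa [TwoSidedIdeal.mem_bot] using h1
      apply Subtype.ext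
      change x * r.unop = 0
      refine socle_mul_radical A hinj _ (fun b => ⟨n, ?_⟩) x hx
      have h3 := hn (fun _ => b * r.unop) (fun _ => Ideal.mul_mem_left _ _ h2)
      rwa [List.ofFn_const, List.prod_replicate] at h3
  refine ⟨⟨Sop, fun _ => Iff.rfl, hS⟩, fun x hx => ?_⟩
  have h5 := socle_map_le Sop.subtype
  have h6 : socle Aᵐᵒᵖ Sop = ⊤ := IsSemisimpleModule.sSup_simples_eq_top _ _
  rw [h6] at h5
  exact h5 ⟨⟨x, hx⟩, trivial, rfl⟩
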